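/- Let h and n be positive integers. Then h^{<n>} < h^{<n+1>}. -/

import Mathlib

/-!
Let `D n h = h^{<n>} - h`. If `h = C(a_n, n) + ⋯ + C(a_i, i)` is the greedy representation, then
`D n h = C(a_n, n-1) + ⋯ + C(a_i, i-1)`, the shadow size of the initial colex segment of `h` sets
of size `n`. The claim is `D n h < D (n+1) h`, and the crux is that `D n` is subadditive
(`excess_add_le`).

Subadditivity is proved without set families. Isolating the sets that contain the least element
suggests that `D (n+1) h = ℓ + D n ℓ` for the least `ℓ` with `D (n+1) (h - ℓ) ≤ ℓ`. One direction
is `exists_link` (some such `ℓ` has `ℓ + D n ℓ ≤ D (n+1) h`), the other is `excess_le_of_link`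
(every such `m` has `D (n+1) h ≤ m + D n m`). Both are inductions on `n` along the greedy recursion.
Given such `ℓ` for `x` and `ℓ'` for `y`, induction on `x + y` shows that `ℓ + ℓ'` is admissible
for `x + y`, and subadditivity for `n + 1` follows from subadditivity for `n`.

Subadditivity and Pascal's rule give `D n (C(a, n+1)) < C(a, n)` by induction on `a`. For
`h = C(a, n+1) + r` with `r < C(a, n)` this yields
`D n h ≤ D n (C(a, n+1)) + D n r < C(a, n) + D n r = D (n+1) h`.
-/

open Finset

/-- `macUp n h` is `h^{<n>}`, computed via the greedy (Macaulay) binomial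
representation `h = C(a_n, n) + C(a_{n-1}, n-1) + ⋯` (equivalently
`h = C(h(n)+n, n) + ⋯ + C(h(i)+i, i)` with `h(n) ≥ ⋯ ≥ h(i) ≥ 0`), giving
`h^{<n>} = C(a_n+1, n) + C(a_{n-1}+1, n-1) + ⋯`; `macUp n 0 = 0`, `macUp 0 1 = 1`. -/
def macUp : ℕ → ℕ → ℕ
  | 0, h => h
  | n+1, h =>
    if h = 0 then 0
    else
      let a := Nat.findGreatest (fun a => Nat.choose a (n+1) ≤ h) (h + n + 1)
      Nat.choose (a+1) (n+1) + macUp n (h - Nat.choose a (n+1))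

/-! ### The greedy recursion -/

theorem macUp_zero_right (n : ℕ) : macUp n 0 = 0 := by
  cases n <;> simp [macUp]

/-- The greedy step is determined by the inequalities `C(a, n+1) ≤ h < C(a+1, n+1)`, written here
as `h = C(a, n+1) + r` with `r < C(a, n)`. -/
theorem macUp_block {n a r : ℕ} (ha : n + 1 ≤ a) (hr : r < a.choose n) :
    macUp (n + 1) (a.choose (n + 1) + r) = (a + 1).choose (n + 1) + macUp n r := by
  have hpos : 0 < a.choose (n + 1) := Nat.choose_pos ha
  have hle : a ≤ a.choose (n + 1) + n := by
    have key : ∀ k, n + 1 + k ≤ (n + 1 + k).choose (n + 1) + n := by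
      intro k
      induction k with
      | zero => simp
      | succ k ih =>
        have h1 := Nat.choose_succ_succ (n + 1 + k) n
        have h2 : 0 < (n + 1 + k).choose n := Nat.choose_pos (by omega)
        have h3 : n + 1 + (k + 1) = (n + 1 + k) + 1 := by ring
        rw [h3]
        simp only [Nat.succ_eq_add_one] at h1
        omega
    obtain ⟨k, rfl⟩ := Nat.exists_eq_add_of_le ha
    exact key k
  have hfg : Nat.findGreatest (fun b => Nat.choose b (n + 1) ≤ a.choose (n + 1) + r)
      (a.choose (n + 1) + r + n + 1) = a := by
    rw [Nat.findGreatest_eq_iff]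
    refine ⟨by omega, fun _ => by omega, ?_⟩
    intro b hb _ hc
    have h1 : (a + 1).choose (n + 1) ≤ b.choose (n + 1) := Nat.choose_le_choose _ hb
    have h2 := Nat.choose_succ_succ a n
    simp only [Nat.succ_eq_add_one] at h2
    omega
  rw [macUp, if_neg (by omega)]
  simp only [hfg]
  rw [Nat.add_sub_cancel_left]

theorem exists_block (n h : ℕ) (hh : 0 < h) :
    ∃ a r, n + 1 ≤ a ∧ r < a.choose n ∧ h = a.choose (n + 1) + r := by
  induction h, hh using Nat.le_induction with
  | base => exact ⟨n + 1, 0, le_rfl, by simp, by simp⟩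
  | succ h _ ih =>
    obtain ⟨a, r, ha, hr, rfl⟩ := ih
    by_cases hr' : r + 1 < a.choose n
    · exact ⟨a, r + 1, ha, hr', by ring⟩
    · refine ⟨a + 1, 0, by omega, Nat.choose_pos (by omega), ?_⟩
      have h2 := Nat.choose_succ_succ a n
      simp only [Nat.succ_eq_add_one] at h2
      omega

/-! ### The excess, its recursion and monotonicity -/

/-- The excess `h^{<n>} - h`, which is the size of the shadow of the initial colex segment of `h`
sets of size `n`. The subtraction never truncates, by `le_macUp`. -/
def excess (n h : ℕ) : ℕ := macUp n h - h

theorem le_macUp (n h : ℕ) : h ≤ macUp n h := by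
  induction n generalizing h with
  | zero => simp [macUp]
  | succ n ih =>
    rcases Nat.eq_zero_or_pos h with rfl | hh
    · simp
    · obtain ⟨a, r, ha, hr, rfl⟩ := exists_block n h hh
      rw [macUp_block ha hr, Nat.choose_succ_succ]
      have := ih r
      simp only [Nat.succ_eq_add_one]
      omega

theorem excess_zero_left (h : ℕ) : excess 0 h = 0 := by simp [excess, macUp]

theorem excess_zero_right (n : ℕ) : excess n 0 = 0 := by simp [excess, macUp_zero_right]

theorem excess_block_lt {n a r : ℕ} (ha : n + 1 ≤ a) (hr : r < a.choose n) :
    excess (n + 1) (a.choose (n + 1) + r) = a.choose n + excess n r := by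
  unfold excess
  rw [macUp_block ha hr, Nat.choose_succ_succ]
  have := le_macUp n r
  simp only [Nat.succ_eq_add_one]
  omega

theorem excess_choose {n a : ℕ} (ha : n + 1 ≤ a) :
    excess (n + 1) (a.choose (n + 1)) = a.choose n := by
  have := excess_block_lt (r := 0) ha (Nat.choose_pos (by omega))
  simpa [excess_zero_right] using this

theorem excess_one (n : ℕ) : excess n 1 = n := by
  cases n with
  | zero => exact excess_zero_left 1
  | succ n => simpa using excess_choose (le_refl (n + 1))

/-- The recursion on a closed block: it remains valid at the upper end `r = C(a, n)`, where
`C(a, n+1) + r = C(a+1, n+1)`, and for `a = n` provided `r` is positive. -/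
theorem excess_block {n a r : ℕ} (ha : n ≤ a) (hr : r ≤ a.choose n) (h : n + 1 ≤ a ∨ 0 < r) :
    excess (n + 1) (a.choose (n + 1) + r) = a.choose n + excess n r := by
  rcases hr.lt_or_eq with hr | rfl
  · by_cases ha' : n + 1 ≤ a
    · exact excess_block_lt ha' hr
    · obtain rfl : n = a := by omega
      simp at hr
      omega
  · have e : a.choose (n + 1) + a.choose n = (a + 1).choose (n + 1) := by
      rw [Nat.choose_succ_succ, add_comm]
    rw [e, excess_choose (by omega)]
    cases n with
    | zero => simp [excess_zero_left]
    | succ k => rw [excess_choose ha, Nat.choose_succ_succ, add_comm]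

theorem excess_mono (n : ℕ) : Monotone (excess n) := by
  induction n with
  | zero => intro x y _; simp [excess_zero_left]
  | succ n ih =>
    refine monotone_nat_of_le_succ fun h => ?_
    rcases Nat.eq_zero_or_pos h with rfl | hh
    · simp [excess_zero_right]
    · obtain ⟨a, r, ha, hr, rfl⟩ := exists_block n h hh
      rw [add_assoc, excess_block (by omega) hr.le (Or.inl ha),
        excess_block (by omega) hr (Or.inl ha)]
      exact Nat.add_le_add_left (ih (Nat.le_succ r)) _

/-- Beyond `C(a, n+1)` the excess is at least its value at `C(a, n+1) + 1`. -/
theorem le_excess_of_lt {n a h : ℕ} (ha : n ≤ a) (h1 : a.choose (n + 1) < h) :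
    a.choose n + n ≤ excess (n + 1) h := by
  have := excess_mono (n + 1) (Nat.succ_le_of_lt h1)
  simp only [Nat.succ_eq_add_one] at this
  rwa [excess_block ha (Nat.choose_pos ha) (Or.inr one_pos), excess_one] at this

/-! ### Splitting off the sets through a point -/

/-- If `m` sets through a fixed point can carry the shadow of the remaining `h - m` sets, then the
shadow of `h` sets is at most `m + D n m`. -/
theorem excess_le_of_link (n : ℕ) : ∀ h m, excess (n + 1) (h - m) ≤ m →
    excess (n + 1) h ≤ m + excess n m := by
  induction n with
  | zero =>
    intro h m hm
    rcases Nat.eq_zero_or_pos m with rfl | hm0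
    · simp at hm
      simp [hm]
    · rcases Nat.eq_zero_or_pos h with rfl | hh
      · simp [excess_zero_right]
      · obtain ⟨a, r, ha, hr, rfl⟩ := exists_block 0 h hh
        rw [excess_block_lt ha hr]
        simp [excess_zero_left]
        omega
  | succ n ih =>
    intro h m hm
    rcases Nat.eq_zero_or_pos h with rfl | hh
    · simp [excess_zero_right]
    obtain ⟨a, r, ha, hr, rfl⟩ := exists_block (n + 1) h hh
    obtain ⟨b, rfl⟩ : ∃ b, a = b + 1 := ⟨a - 1, by omega⟩
    have p1 : (b + 1).choose (n + 1 + 1) = b.choose (n + 1) + b.choose (n + 1 + 1) :=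
      Nat.choose_succ_succ b (n + 1)
    have p2 : (b + 1).choose (n + 1) = b.choose n + b.choose (n + 1) := Nat.choose_succ_succ b n
    rw [excess_block_lt ha hr]
    -- The extreme values of `m` are settled by monotonicity; for `C(b, n+1) ≤ m < C(b+1, n+1)`
    -- the claim for `(h, m)` reduces to the one for the remainders `(r, t)` one degree lower.
    by_cases c1 : (b + 1).choose (n + 1) ≤ m
    · have := excess_mono (n + 1) (hr.le.trans c1)
      omega
    by_cases c2 : m < b.choose (n + 1)
    · have := le_excess_of_lt (n := n + 1) (a := b)
        (h := (b + 1).choose (n + 1 + 1) + r - m) (by omega) (by omega)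
      omega
    obtain ⟨t, rfl⟩ := Nat.exists_eq_add_of_le (not_lt.1 c2)
    have ht : t ≤ b.choose n := by omega
    rw [excess_block (a := b) (r := t) (by omega) ht (Or.inl (by omega))]
    suffices hs : excess (n + 1) (r - t) ≤ t by
      have := ih r t hs
      omega
    by_cases c3 : r ≤ t
    · rw [Nat.sub_eq_zero_of_le c3, excess_zero_right]
      omega
    by_cases c4 : r - t ≤ b.choose (n + 1)
    · have e : (b + 1).choose (n + 1 + 1) + r - (b.choose (n + 1) + t)
          = b.choose (n + 1 + 1) + (r - t) := by omega
      rw [e, excess_block (by omega) c4 (Or.inr (by omega))] at hm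
      omega
    · have := le_excess_of_lt (n := n + 1) (a := b + 1)
        (h := (b + 1).choose (n + 1 + 1) + r - (b.choose (n + 1) + t)) (by omega) (by omega)
      omega

/-- The witness `ℓ` is `∑ C(a_i - 1, i - 1)` for the greedy representation `∑ C(a_i, i)` of `h`:
the number of sets in the initial segment that contain the least element. -/
theorem exists_link (n : ℕ) : ∀ h, ∃ l, l ≤ h ∧ excess (n + 1) (h - l) ≤ l ∧
    l + excess n l ≤ excess (n + 1) h := by
  induction n with
  | zero =>
    intro h
    have h1 : ∀ x, 0 < x → excess (0 + 1) x = 1 := by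
      intro x hx
      obtain ⟨a, r, ha, hr, rfl⟩ := exists_block 0 x hx
      rw [excess_block_lt ha hr]
      simp [excess_zero_left]
    rcases Nat.eq_zero_or_pos h with rfl | hh
    · exact ⟨0, le_rfl, by simp [excess_zero_right], by simp [excess_zero_right]⟩
    · refine ⟨1, hh, ?_, by rw [h1 h hh, excess_zero_left]⟩
      exact (excess_mono _ (Nat.sub_le h 1)).trans (h1 h hh).le
  | succ n ih =>
    intro h
    rcases Nat.eq_zero_or_pos h with rfl | hh
    · exact ⟨0, le_rfl, by simp [excess_zero_right], by simp [excess_zero_right]⟩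
    obtain ⟨a, r, ha, hr, rfl⟩ := exists_block (n + 1) h hh
    obtain ⟨b, rfl⟩ : ∃ b, a = b + 1 := ⟨a - 1, by omega⟩
    have p1 : (b + 1).choose (n + 1 + 1) = b.choose (n + 1) + b.choose (n + 1 + 1) :=
      Nat.choose_succ_succ b (n + 1)
    have p2 : (b + 1).choose (n + 1) = b.choose n + b.choose (n + 1) := Nat.choose_succ_succ b n
    obtain ⟨l, hl, hl1, hl2⟩ := ih r
    -- `c1` and `c2` place both remainders in closed blocks, so that `excess_block` applies.
    have c1 : l ≤ b.choose n := by
      have hub := excess_mono (n + 1) hr.le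
      rw [excess_choose (by omega)] at hub
      by_contra! hc
      cases n with
      | zero =>
        rw [Nat.choose_zero_right] at hub hc
        omega
      | succ k =>
        have p3 : (b + 1).choose (k + 1) = b.choose k + b.choose (k + 1) :=
          Nat.choose_succ_succ b k
        have := le_excess_of_lt (n := k) (a := b) (by omega) hc
        omega
    have c2 : r - l ≤ b.choose (n + 1) := by
      by_contra! hc
      have := le_excess_of_lt (n := n) (a := b) (by omega) hc
      omega
    refine ⟨b.choose (n + 1) + l, by omega, ?_, ?_⟩
    · have e : (b + 1).choose (n + 1 + 1) + r - (b.choose (n + 1) + l)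
          = b.choose (n + 1 + 1) + (r - l) := by omega
      rw [e]
      by_cases c3 : n + 1 + 1 ≤ b ∨ 0 < r - l
      · rw [excess_block (by omega) c2 c3]
        omega
      · have h0 : b.choose (n + 1 + 1) = 0 := Nat.choose_eq_zero_of_lt (by omega)
        have h1 : r - l = 0 := by omega
        rw [h0, h1]
        simp [excess_zero_right]
    · rw [excess_block (a := b) (r := l) (by omega) c1 (Or.inl (by omega)),
        excess_block_lt ha hr]
      omega

/-! ### Subadditivity and the comparison of consecutive degrees -/

theorem excess_pos {n h : ℕ} (hh : 0 < h) : 0 < excess (n + 1) h := by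
  have := excess_mono (n + 1) (Nat.succ_le_of_lt hh)
  simp only [Nat.succ_eq_add_one, zero_add] at this
  rw [excess_one] at this
  omega

theorem excess_add_le (n : ℕ) : ∀ x y, excess n (x + y) ≤ excess n x + excess n y := by
  induction n with
  | zero => intro x y; simp [excess_zero_left]
  | succ n ihn =>
    suffices key : ∀ N x y, x + y ≤ N →
        excess (n + 1) (x + y) ≤ excess (n + 1) x + excess (n + 1) y from
      fun x y => key _ x y le_rfl
    intro N
    induction N with
    | zero =>
      intro x y hxy
      have : x + y = 0 := by omega
      simp [this, excess_zero_right]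
    | succ N ih =>
      intro x y hxy
      rcases Nat.eq_zero_or_pos x with rfl | hx
      · simp
      obtain ⟨l, hl, hl1, hl2⟩ := exists_link n x
      obtain ⟨k, hk, hk1, hk2⟩ := exists_link n y
      have hl0 : 0 < l := by
        by_contra! hc
        obtain rfl : l = 0 := by omega
        have := excess_pos (n := n) hx
        simp at hl1
        omega
      have h1 := ih (x - l) (y - k) (by omega)
      have h2 := excess_le_of_link n (x + y) (l + k) (by
        have e : x + y - (l + k) = (x - l) + (y - k) := by omega
        rw [e]
        omega)
      have h3 := ihn l k
      omega

theorem excess_choose_succ_lt (n k : ℕ) :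
    excess (n + 1) ((n + 1 + k).choose (n + 1 + 1)) < (n + 1 + k).choose (n + 1) := by
  induction k with
  | zero => simp [excess_zero_right]
  | succ k ih =>
    have p1 := Nat.choose_succ_succ (n + 1 + k) (n + 1)
    have p2 := Nat.choose_succ_succ (n + 1 + k) n
    simp only [Nat.succ_eq_add_one] at p1 p2
    rw [← add_assoc, p1, p2]
    have h1 := excess_add_le (n + 1) ((n + 1 + k).choose (n + 1)) ((n + 1 + k).choose (n + 1 + 1))
    rw [excess_choose (by omega)] at h1
    omega

/-- For positive integers `h` and `n`, `h^{<n>} < h^{<n+1>}`. -/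
theorem macUp_lt_macUp_succ (h n : ℕ) (hh : 0 < h) (hn : 0 < n) :
    macUp n h < macUp (n + 1) h := by
  obtain ⟨n, rfl⟩ : ∃ k, n = k + 1 := ⟨n - 1, by omega⟩
  have hlt : excess (n + 1) h < excess (n + 1 + 1) h := by
    obtain ⟨a, r, ha, hr, rfl⟩ := exists_block (n + 1) h hh
    rw [excess_block_lt ha hr]
    have h1 := excess_add_le (n + 1) (a.choose (n + 1 + 1)) r
    obtain ⟨k, rfl⟩ : ∃ k, a = n + 1 + k := ⟨a - (n + 1), by omega⟩
    have h2 := excess_choose_succ_lt n k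
    omega
  unfold excess at hlt
  omega
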